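/- arXiv:1603.08917 — 12 statements merged into one kernel-verified Lean document; each statement's English description precedes it below -/
import Mathlib

section
/- For every natural number n ≥ 1, there exists a natural number m with m > n such that p_m^{1/m} < p_n^{1/n}. (Existence part of Theorem 1.) -/
open Real

noncomputable def nthPrime (n : ℕ) : ℕ := Nat.nth Nat.Prime (n - 1)

theorem exists_smaller_root (n : ℕ) (hn : 1 ≤ n) :
    ∃ m : ℕ, m > n ∧ (nthPrime m : ℝ) ^ ((1 : ℝ) / m) < (nthPrime n : ℝ) ^ ((1 : ℝ) / n) := by
  by_contra! H
  set c : ℝ := (nthPrime n : ℝ) ^ ((1 : ℝ) / n) with hc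
  have hc1 : 1 < c := by
    apply Real.one_lt_rpow
    · have : Nat.Prime (nthPrime n) := Nat.prime_nth_prime _
      exact_mod_cast this.one_lt
    · positivity
  have hc0 : 0 < c := by linarith
  have key : ∀ m > n, c ^ m ≤ (nthPrime m : ℝ) := by
    intro m hm
    have h1 := pow_le_pow_left₀ hc0.le (H m hm) m
    rwa [one_div, Real.rpow_inv_natCast_pow (by positivity) (by omega)] at h1
  apply not_summable_one_div_on_primes
  have hinj : Function.Injective (Nat.nth Nat.Prime) :=
    Nat.nth_injective Nat.infinite_setOfPred_prime
  rw [← hinj.summable_iff]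
  · rw [← summable_nat_add_iff n]
    have hg : Summable (fun k : ℕ => (c⁻¹) ^ k) :=
      summable_geometric_of_lt_one (by positivity) (inv_lt_one_of_one_lt₀ hc1)
    refine Summable.of_nonneg_of_le (fun k => ?_) (fun k => ?_) hg
    · exact Set.indicator_nonneg (fun x _ => by positivity) _
    · have hk := key (k + n + 1) (by omega)
      have e : nthPrime (k + n + 1) = Nat.nth Nat.Prime (k + n) := rfl
      rw [e] at hk
      have hk' : c ^ k ≤ (Nat.nth Nat.Prime (k + n) : ℝ) :=
        (pow_le_pow_right₀ hc1.le (by omega)).trans hk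
      simp only [Function.comp]
      have hmem : Nat.nth Nat.Prime (k + n) ∈ {p : ℕ | Nat.Prime p} := Nat.prime_nth_prime _
      rw [Set.indicator_of_mem hmem,
        inv_pow, one_div]
      exact inv_anti₀ (by positivity) hk'
  · intro x hx
    apply Set.indicator_of_notMem
    intro hp
    apply hx
    exact ⟨Nat.count Nat.Prime x, Nat.nth_count hp⟩
end

section
/- For every natural number n ≥ 21, (n+1)·log(n+1) < n^{1+1/n}·(log n)^{1+1/n}. (Lemma 1.) -/
open Real

theorem lemma1 (n : ℕ) (hn : 21 ≤ n) :
    ((n : ℝ) + 1) * Real.log ((n : ℝ) + 1) <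
      (n : ℝ) ^ (1 + 1 / (n : ℝ)) * (Real.log n) ^ (1 + 1 / (n : ℝ)) := by
  have hn' : (21 : ℝ) ≤ n := by exact_mod_cast hn
  generalize (n : ℝ) = x at hn'
  have hx : 0 < x := by linarith
  have hL : 2 ≤ Real.log x := by
    rw [Real.le_log_iff_exp_le hx]
    have h1 := Real.exp_one_lt_d9
    have h2 : Real.exp 2 = Real.exp 1 * Real.exp 1 := by
      rw [← Real.exp_add]; norm_num
    have h3 := Real.exp_pos 1
    rw [h2]
    nlinarith
  have hlog : Real.log (x + 1) ≤ Real.log x + 1 / x := by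
    have h : x + 1 = x * (1 + 1 / x) := by field_simp
    have hp : 0 < 1 + 1 / x := by positivity
    rw [h, Real.log_mul hx.ne' hp.ne']
    have := Real.log_le_sub_one_of_pos hp
    linarith
  set L := Real.log x with hLdef
  have hL0 : 0 < L := by linarith
  have hy : 0 < x * L := by positivity
  rw [← Real.mul_rpow hx.le hL0.le, Real.rpow_add hy, Real.rpow_one]
  have hpow : Real.exp (2 / x) ≤ (x * L) ^ (1 / x) := by
    rw [Real.rpow_def_of_pos hy, Real.log_mul hx.ne' hL0.ne']
    apply Real.exp_le_exp.mpr
    have : 0 ≤ Real.log L := Real.log_nonneg (by linarith)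
    rw [div_eq_mul_one_div]
    apply mul_le_mul_of_nonneg_right _ (by positivity)
    linarith
  have e1 := Real.add_one_le_exp (1 / x)
  have e2 := Real.add_one_lt_exp (x := 1 / (x * L)) (by positivity)
  have e3 : 1 / (x * L) ≤ 1 / x := by
    apply one_div_le_one_div_of_le hx
    nlinarith
  calc (x + 1) * Real.log (x + 1) ≤ (x + 1) * (L + 1 / x) := by gcongr
    _ = x * L * ((1 / x + 1) * (1 / (x * L) + 1)) := by field_simp; ring
    _ < x * L * (Real.exp (1 / x) * Real.exp (1 / x)) := by
      apply mul_lt_mul_of_pos_left _ hy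
      apply mul_lt_mul' e1 (e2.trans_le (Real.exp_le_exp.mpr e3)) (by positivity) (Real.exp_pos _)
    _ = x * L * Real.exp (2 / x) := by
      rw [← Real.exp_add]; congr 2; ring
    _ ≤ _ := by gcongr
end

section
/- For every natural number n ≥ 21, log(n+1) < (log n)^{1+1/n}. (Step 2 of Lemma 1; the paper proves it for all n > e^3.) -/
open Real

theorem lemma1_step2 (n : ℕ) (hn : 21 ≤ n) :
    Real.log ((n : ℝ) + 1) < (Real.log n) ^ (1 + 1 / (n : ℝ)) := by
  have hn' : (21 : ℝ) ≤ n := by exact_mod_cast hn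
  have hn0 : (0 : ℝ) < n := by linarith
  have he : Real.exp 1 < 2.7182818286 := Real.exp_one_lt_d9
  have hL : (3 : ℝ) < Real.log n := by
    rw [Real.lt_log_iff_exp_lt hn0]
    have h3 : Real.exp 3 = Real.exp 1 ^ 3 := by
      rw [← Real.exp_nat_mul]; norm_num
    have h4 : Real.exp 1 ^ 3 ≤ 2.7182818286 ^ 3 :=
      pow_le_pow_left₀ (Real.exp_pos 1).le he.le 3
    rw [h3]
    norm_num at h4 ⊢
    linarith
  set L := Real.log n with hLdef
  have hL0 : 0 < L := by linarith
  have hLL : 1 < Real.log L := by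
    rw [Real.lt_log_iff_exp_lt hL0]
    linarith
  have h1 : Real.log ((n : ℝ) + 1) ≤ L + 1 / n := by
    have h : (n : ℝ) + 1 = n * (1 + 1 / n) := by field_simp
    have hp : (0 : ℝ) < 1 + 1 / n := by positivity
    rw [h, Real.log_mul hn0.ne' hp.ne']
    have := Real.log_le_sub_one_of_pos hp
    linarith
  have h2 : L * (1 + Real.log L * (1 / n)) ≤ L ^ (1 + 1 / (n : ℝ)) := by
    rw [Real.rpow_add hL0, Real.rpow_one, Real.rpow_def_of_pos hL0]
    have := Real.add_one_le_exp (Real.log L * (1 / (n : ℝ)))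
    exact mul_le_mul_of_nonneg_left (by linarith) hL0.le
  have hi : (0 : ℝ) < 1 / n := by positivity
  have h3 : 1 < L * Real.log L := by nlinarith
  have h4 := mul_lt_mul_of_pos_right h3 hi
  nlinarith
end

section
/- For every natural number n ≥ 89, ((n+1)·(log(n+1) + log log(n+1) − 1/2))^{1/(n+1)} < (n·(log n + log log n − 1/2))^{1/n}. (Inequality (2.4).) -/
open Real

theorem ineq_2_4 (n : ℕ) (hn : 89 ≤ n) :
    (((n : ℝ) + 1) * (Real.log ((n : ℝ) + 1) + Real.log (Real.log ((n : ℝ) + 1)) - 1 / 2))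
        ^ ((1 : ℝ) / ((n : ℝ) + 1)) <
      ((n : ℝ) * (Real.log n + Real.log (Real.log n) - 1 / 2)) ^ ((1 : ℝ) / (n : ℝ)) := by
  have hx : (89 : ℝ) ≤ n := by exact_mod_cast hn
  generalize (n : ℝ) = x at hx ⊢
  have hx0 : 0 < x := by linarith
  have key : ∀ a b : ℝ, 0 < a → 0 < b → Real.log b - Real.log a ≤ (b - a) / a := by
    intro a b ha hb
    have h := Real.log_le_sub_one_of_pos (div_pos hb ha)
    rw [Real.log_div hb.ne' ha.ne'] at h
    have : (b - a) / a = b / a - 1 := by field_simp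
    linarith
  have he := Real.exp_one_lt_d9
  have hL : 3 < Real.log x := by
    rw [Real.lt_log_iff_exp_lt hx0]
    have h3 : Real.exp 3 = Real.exp 1 ^ 3 := by
      rw [← Real.exp_nat_mul]; norm_num
    have : Real.exp 1 ^ 3 < 3 ^ 3 := by
      gcongr; linarith
    rw [h3]; linarith
  have h1 := key x (x + 1) hx0 (by linarith)
  have hmono : Real.log x ≤ Real.log (x + 1) := Real.log_le_log hx0 (by linarith)
  have hF1 : Real.log (x + 1) = Real.log x + (Real.log (x + 1) - Real.log x) := by ring
  set L := Real.log x with hLd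
  set M := Real.log (x + 1) with hMd
  have h2 := key L M (by linarith) (by linarith)
  have hLL : 1 < Real.log L := by
    rw [Real.lt_log_iff_exp_lt (by linarith)]; linarith
  have hmono2 : Real.log L ≤ Real.log M := Real.log_le_log (by linarith) hmono
  set A := L + Real.log L - 1 / 2 with hA
  set B := M + Real.log M - 1 / 2 with hB
  have hA3 : 7 / 2 < A := by linarith
  have hB3 : 7 / 2 < B := by linarith
  have h3 := key A B (by linarith) (by linarith)
  have hlA : 0 < Real.log A := Real.log_pos (by linarith)
  have e1 : M - L ≤ 1 / x := by
    have : (x + 1 - x) / x = 1 / x := by ring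
    linarith
  have e2 : (M - L) / L ≤ (M - L) / 3 :=
    div_le_div_of_nonneg_left (by linarith) (by norm_num) hL.le
  have e3 : (B - A) / A ≤ (B - A) / (7 / 2) :=
    div_le_div_of_nonneg_left (by linarith) (by norm_num) hA3.le
  have e4 : x * (M - L) ≤ 1 := by
    rw [le_div_iff₀ hx0] at e1; linarith
  have e5 : Real.log B - Real.log A ≤ M - L := by linarith
  have e6 : x * (Real.log B - Real.log A) ≤ x * (M - L) := by gcongr
  have hG : 0 < (x + 1) * B := by nlinarith
  have hF : 0 < x * A := by nlinarith
  rw [Real.rpow_def_of_pos hG, Real.rpow_def_of_pos hF, Real.exp_lt_exp,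
    Real.log_mul (by linarith) (by linarith), Real.log_mul (by linarith) (by linarith),
    mul_one_div, mul_one_div, div_lt_div_iff₀ (by linarith) hx0]
  rw [← hLd, ← hMd]
  nlinarith
end

section
/- For every natural number n ≥ 195340, ((n+1)·(log(n+1) + log log(n+1) − 3/2))^{1/(n+1)} < (n·(log n + log log n − 3/2))^{1/n}. (Inequality (2.5).) -/
open Real

theorem ineq_2_5 (n : ℕ) (hn : 195340 ≤ n) :
    (((n : ℝ) + 1) * (Real.log ((n : ℝ) + 1) + Real.log (Real.log ((n : ℝ) + 1)) - 3 / 2))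
        ^ ((1 : ℝ) / ((n : ℝ) + 1)) <
      ((n : ℝ) * (Real.log n + Real.log (Real.log n) - 3 / 2)) ^ ((1 : ℝ) / (n : ℝ)) := by
  have hx : (195340 : ℝ) ≤ (n : ℝ) := by exact_mod_cast hn
  generalize (n : ℝ) = x at hx
  have hx0 : 0 < x := by linarith
  have hL : 4 < Real.log x := by
    rw [Real.lt_log_iff_exp_lt hx0]
    have h1 : Real.exp 4 = Real.exp 1 ^ 4 := by
      rw [← Real.exp_nat_mul]; norm_num
    have h2 : Real.exp 1 ^ 4 ≤ 3 ^ 4 := by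
      have := Real.exp_one_lt_d9
      exact pow_le_pow_left₀ (Real.exp_pos 1).le (by linarith) 4
    rw [h1]
    linarith
  have key : ∀ y d : ℝ, 0 < y → 0 < d → Real.log (y + d) ≤ Real.log y + d / y := by
    intro y d hy hd
    have h1 : y + d = y * (1 + d / y) := by field_simp
    have h2 : 0 < 1 + d / y := by positivity
    rw [h1, Real.log_mul hy.ne' h2.ne']
    have := Real.log_le_sub_one_of_pos h2
    linarith
  set L := Real.log x with hLdef
  have hL0 : 0 < L := by linarith
  have hinv : 0 < 1 / x := by positivity
  have hM1 : Real.log (x + 1) ≤ L + 1 / x := key x 1 hx0 one_pos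
  have hM0 : L ≤ Real.log (x + 1) := Real.log_le_log hx0 (by linarith)
  have hLL0 : 0 ≤ Real.log L := Real.log_nonneg (by linarith)
  have hLL1 : Real.log L ≤ Real.log (Real.log (x + 1)) := Real.log_le_log hL0 hM0
  have hLL2 : Real.log (Real.log (x + 1)) ≤ Real.log L + 1 / x := by
    have h1 : Real.log (Real.log (x + 1)) ≤ Real.log (L + 1 / x) :=
      Real.log_le_log (by linarith) hM1
    have h2 := key L (1 / x) hL0 hinv
    have h3 : 1 / x / L ≤ 1 / x := div_le_self hinv.le (by linarith)
    linarith
  set l := L + Real.log L - 3 / 2 with hl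
  set m := Real.log (x + 1) + Real.log (Real.log (x + 1)) - 3 / 2 with hm
  have hl1 : 5 / 2 ≤ l := by linarith
  have hml : m ≤ l + 2 / x := by
    have : 2 / x = 1 / x + 1 / x := by ring
    linarith
  have hm1 : 5 / 2 ≤ m := by linarith
  have hA : 0 < x * l := by positivity
  have hB : 0 < (x + 1) * m := by positivity
  have hBA : (x + 1) * m ≤ x * l + (l + 3) := by
    have h1 : (x + 1) * m ≤ (x + 1) * (l + 2 / x) := by gcongr
    have h2 : (x + 1) * (l + 2 / x) = x * l + l + 2 + 2 / x := by field_simp; ring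
    have h3 : 2 / x ≤ 1 := by rw [div_le_one hx0]; linarith
    linarith
  have hlog : Real.log ((x + 1) * m) ≤ Real.log (x * l) + (l + 3) / (x * l) :=
    (Real.log_le_log hB hBA).trans (key _ _ hA (by linarith))
  have hq : x * ((l + 3) / (x * l)) ≤ 4 := by
    have : x * ((l + 3) / (x * l)) = (l + 3) / l := by field_simp
    rw [this, div_le_iff₀ (by linarith)]
    linarith
  have hlA : L ≤ Real.log (x * l) := Real.log_le_log hx0 (by nlinarith)
  have hmain : x * Real.log ((x + 1) * m) < (x + 1) * Real.log (x * l) := by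
    have := mul_le_mul_of_nonneg_left hlog hx0.le
    linarith
  rw [Real.rpow_def_of_pos hB, Real.rpow_def_of_pos hA, Real.exp_lt_exp,
    mul_one_div, mul_one_div, div_lt_div_iff₀ (by linarith) hx0]
  linarith
end

section
/- For all natural numbers m, n with n ≥ 195340 and m ≥ 3n, (m·log m + m·log log m − m/2)^{1/m} < (n·log n + n·log log n − 3n/2)^{1/n}. (Inequality (3.12), equivalently the middle part of inequality (2.6).) -/
open Real

theorem ineq_3_12 (m n : ℕ) (hn : 195340 ≤ n) (hm : 3 * n ≤ m) :
    ((m : ℝ) * Real.log m + (m : ℝ) * Real.log (Real.log m) - (m : ℝ) / 2)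
        ^ ((1 : ℝ) / (m : ℝ)) <
      ((n : ℝ) * Real.log n + (n : ℝ) * Real.log (Real.log n) - 3 * (n : ℝ) / 2)
        ^ ((1 : ℝ) / (n : ℝ)) := by
  have hn' : (195340 : ℝ) ≤ n := by exact_mod_cast hn
  have hm' : 3 * (n : ℝ) ≤ m := by exact_mod_cast hm
  generalize (n : ℝ) = x at *
  generalize (m : ℝ) = y at *
  have hx0 : 0 < x := by linarith
  have hy0 : 0 < y := by linarith
  have hL : 10 ≤ Real.log x := by
    rw [Real.le_log_iff_exp_le hx0]
    have h1 : Real.exp 10 = Real.exp 1 ^ 10 := by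
      rw [← Real.exp_nat_mul]; norm_num
    have h2 : Real.exp 1 ^ 10 ≤ (2.7182818286 : ℝ) ^ 10 :=
      pow_le_pow_left₀ (Real.exp_pos 1).le Real.exp_one_lt_d9.le 10
    rw [h1]
    refine h2.trans (le_trans ?_ hn')
    norm_num
  have hM : Real.log x ≤ Real.log y := Real.log_le_log hx0 (by linarith)
  have hLL : 0 ≤ Real.log (Real.log x) := Real.log_nonneg (by linarith)
  have hMM : 0 ≤ Real.log (Real.log y) := Real.log_nonneg (by linarith)
  have hMM2 : Real.log (Real.log y) ≤ Real.log y - 1 :=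
    Real.log_le_sub_one_of_pos (by linarith)
  have hM2 : Real.log y ≤ y - 1 := Real.log_le_sub_one_of_pos hy0
  have ht : Real.log y - Real.log x ≤ y / x - 1 := by
    rw [← Real.log_div hy0.ne' hx0.ne']
    exact Real.log_le_sub_one_of_pos (by positivity)
  have ht3 : 3 ≤ y / x := by rw [le_div_iff₀ hx0]; exact hm'
  have hyx : y = y / x * x := by field_simp
  have hFpos : 0 < y * Real.log y + y * Real.log (Real.log y) - y / 2 := by
    nlinarith
  have hG : x ≤ x * Real.log x + x * Real.log (Real.log x) - 3 * x / 2 := by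
    nlinarith
  have hF : y * Real.log y + y * Real.log (Real.log y) - y / 2 ≤ 2 * y ^ 2 := by
    nlinarith
  have hlF := Real.log_le_log hFpos hF
  rw [Real.log_mul (by norm_num) (by positivity), Real.log_pow] at hlF
  have hlG := Real.log_le_log hx0 hG
  have hl2 : Real.log 2 ≤ 2 - 1 := Real.log_le_sub_one_of_pos (by norm_num)
  rw [Real.rpow_def_of_pos hFpos, Real.rpow_def_of_pos (by linarith), Real.exp_lt_exp,
    mul_one_div, mul_one_div]
  refine lt_of_lt_of_le ?_ (div_le_div_of_nonneg_right hlG hx0.le)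
  rw [div_lt_div_iff₀ hy0 hx0]
  push_cast at hlF
  have key : Real.log (y * Real.log y + y * Real.log (Real.log y) - y / 2)
      < Real.log x * (y / x) := by
    nlinarith
  calc _ < Real.log x * (y / x) * x := mul_lt_mul_of_pos_right key hx0
    _ = Real.log x * y := by field_simp
end

section
/- For all natural numbers m, n with n ≥ 195340 and m ≥ 3n, p_m^{1/m} < p_n^{1/n}. (Consequence of inequality (2.6).) -/
open Real

theorem le_pi_sq (m : ℕ) (hm : 586020 ≤ m) : m ≤ Nat.primeCounting (m ^ 2) := by
  have h := Chebyshev.pi_ge (m ^ 2)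
  have hm' : (586020 : ℝ) ≤ m := by exact_mod_cast hm
  have hl : 0 < log (m : ℝ) := log_pos (by linarith)
  push_cast at h
  rw [log_pow] at h
  push_cast at h
  have h1 : log (m : ℝ) ≤ m / 100 + 99 := by
    have a := log_le_sub_one_of_pos (show (0 : ℝ) < m / 100 by positivity)
    have b := log_le_sub_one_of_pos (show (0 : ℝ) < 100 by positivity)
    rw [log_div (by positivity) (by positivity)] at a
    linarith
  have h2 : log ((m : ℝ) ^ 2 + 1) ≤ 3 * log m := by
    have : log ((m : ℝ) ^ 2 + 1) ≤ log ((m : ℝ) ^ 3) :=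
      log_le_log (by positivity) (by nlinarith [sq_nonneg (m : ℝ)])
    rw [log_pow] at this
    exact_mod_cast this
  have h3 := log_two_gt_d9
  have h4 : (m : ℝ) ≤ ((m : ℝ) ^ 2 * log 2 - log ((m : ℝ) ^ 2 + 1)) / (2 * log m) := by
    rw [le_div_iff₀ (by positivity)]
    have e1 : (2 * (m : ℝ) + 3) * log m ≤ (2 * (m : ℝ) + 3) * (m / 100 + 99) := by gcongr
    have e2 : (m : ℝ) ^ 2 * 0.69 ≤ (m : ℝ) ^ 2 * log 2 := by gcongr; linarith
    nlinarith
  exact_mod_cast h4.trans h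

theorem ineq_2_6_consequence (m n : ℕ) (hn : 195340 ≤ n) (hm : 3 * n ≤ m) :
    (nthPrime m : ℝ) ^ ((1 : ℝ) / m) < (nthPrime n : ℝ) ^ ((1 : ℝ) / n) := by
  have hup : nthPrime m ≤ m ^ 2 := by
    have h := le_pi_sq m (by omega)
    rw [Nat.primeCounting, Nat.primeCounting'] at h
    have := Nat.nth_lt_of_lt_count (p := Nat.Prime) (n := m ^ 2 + 1) (k := m - 1) (by omega)
    unfold nthPrime
    omega
  have hlo : n ≤ nthPrime n := by
    have := Nat.add_two_le_nth_prime (n - 1)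
    unfold nthPrime
    omega
  have hpm : 0 < nthPrime m := (Nat.prime_nth_prime _).pos
  have hn' : (195340 : ℝ) ≤ n := by exact_mod_cast hn
  have hm' : 3 * (n : ℝ) ≤ m := by exact_mod_cast hm
  have hup' : (nthPrime m : ℝ) ≤ (m : ℝ) ^ 2 := by exact_mod_cast hup
  have hlo' : (n : ℝ) ≤ nthPrime n := by exact_mod_cast hlo
  have hpm' : (0 : ℝ) < nthPrime m := by exact_mod_cast hpm
  have hpn' : (0 : ℝ) < nthPrime n := by linarith
  have hn0 : (0 : ℝ) < n := by linarith
  have hm0 : (0 : ℝ) < m := by linarith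
  rw [← log_lt_log_iff (by positivity) (by positivity), log_rpow hpm', log_rpow hpn']
  have a1 : log (nthPrime m : ℝ) ≤ 2 * log m := by
    have := log_le_log hpm' hup'
    rw [log_pow] at this
    exact_mod_cast this
  have a2 : log (n : ℝ) ≤ log (nthPrime n : ℝ) := log_le_log hn0 hlo'
  have he : exp 1 ≤ 3 := by linarith [exp_one_lt_d9]
  have a3 : log (m : ℝ) / m ≤ log (3 * n : ℝ) / (3 * n) :=
    log_div_self_antitoneOn (by simp; linarith) (by simp; linarith) hm'
  have a4 : 2 * log 3 < log (n : ℝ) := by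
    have : log ((3 : ℝ) ^ 2) < log n := log_lt_log (by norm_num) (by linarith)
    rw [log_pow] at this
    exact_mod_cast this
  rw [log_mul (by norm_num) hn0.ne'] at a3
  calc 1 / (m : ℝ) * log (nthPrime m) ≤ 1 / (m : ℝ) * (2 * log m) := by gcongr
    _ = 2 * (log m / m) := by ring
    _ ≤ 2 * ((log 3 + log n) / (3 * n)) := by linarith
    _ = 1 / (n : ℝ) * (2 * (log 3 + log n) / 3) := by field_simp
    _ < 1 / (n : ℝ) * log n := by
      apply mul_lt_mul_of_pos_left _ (by positivity)
      linarith
    _ ≤ 1 / (n : ℝ) * log (nthPrime n) := by gcongr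
end

section
/- For every natural number n ≥ 89, (n+1)^n·(log(n+1) + log log(n+1) − 1/2)^n < n^{n+1}·(log n + log log n − 1/2)^{n+1}. (Inequality (3.1).) -/
open Real

theorem ineq_3_1 (n : ℕ) (hn : 89 ≤ n) :
    ((n : ℝ) + 1) ^ n * (Real.log ((n : ℝ) + 1) + Real.log (Real.log ((n : ℝ) + 1)) - 1 / 2) ^ n <
      (n : ℝ) ^ (n + 1) * (Real.log n + Real.log (Real.log n) - 1 / 2) ^ (n + 1) := by
  have hx : (89 : ℝ) ≤ n := by exact_mod_cast hn
  have key : ∀ y : ℝ, 0 < y → Real.log (y + 1 / n) ≤ Real.log y + 1 / n / y := by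
    intro y hy
    have h0 : (0:ℝ) < 1 / n := by positivity
    have h1 : y + 1 / n = y * (1 + 1 / n / y) := by field_simp
    rw [h1, Real.log_mul (by positivity) (by positivity)]
    have := Real.log_le_sub_one_of_pos (show 0 < 1 + 1 / (n:ℝ) / y by positivity)
    linarith
  have he := Real.exp_one_lt_d9
  have he0 := Real.exp_pos 1
  have hL : 3 ≤ Real.log n := by
    rw [Real.le_log_iff_exp_le (by linarith)]
    have : Real.exp 3 = Real.exp 1 ^ 3 := by rw [← Real.exp_nat_mul]; norm_num
    rw [this]
    have : Real.exp 1 ^ 3 ≤ 3 ^ 3 := by gcongr; linarith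
    linarith
  have hLL : 0 ≤ Real.log (Real.log n) := Real.log_nonneg (by linarith)
  have hA : (n:ℝ) + 1 ≤ n * Real.exp (1 / n) := by
    have := Real.add_one_le_exp (1 / (n:ℝ))
    have h2 : (n:ℝ) * (1 / n + 1) = n + 1 := by field_simp; ring
    rw [← h2]; gcongr
  have hl1 : Real.log ((n:ℝ) + 1) ≤ Real.log n + 1 / n := by
    have := Real.log_le_log (by positivity) hA
    rwa [Real.log_mul (by positivity) (by positivity), Real.log_exp] at this
  have hl0 : Real.log n ≤ Real.log ((n:ℝ) + 1) :=
    Real.log_le_log (by positivity) (by linarith)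
  have hl2 : Real.log (Real.log ((n:ℝ) + 1)) ≤ Real.log (Real.log n) + 1 / n := by
    have h1 := Real.log_le_log (by linarith) hl1
    have h2 := key _ (show 0 < Real.log n by linarith)
    have h3 : 1 / (n:ℝ) / Real.log n ≤ 1 / n := div_le_self (by positivity) (by linarith)
    linarith
  have hll0 : 0 ≤ Real.log (Real.log ((n:ℝ) + 1)) := Real.log_nonneg (by linarith)
  set f := Real.log n + Real.log (Real.log n) - 1 / 2 with hf
  set F := Real.log ((n : ℝ) + 1) + Real.log (Real.log ((n : ℝ) + 1)) - 1 / 2 with hF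
  have hf2 : 2 ≤ f := by linarith
  have hF0 : 0 ≤ F := by linarith
  have hFf : F ≤ f * Real.exp (1 / n) := by
    have h1 := Real.add_one_le_exp (1 / (n:ℝ))
    have h0 : (0:ℝ) < 1 / n := by positivity
    have h2 : f * (1 / n + 1) ≤ f * Real.exp (1 / n) := by gcongr
    nlinarith
  have hE : Real.exp (1 / (n:ℝ)) ^ n = Real.exp 1 := by
    rw [← Real.exp_nat_mul]; congr 1; field_simp
  calc ((n : ℝ) + 1) ^ n * F ^ n
      ≤ (n * Real.exp (1 / n)) ^ n * (f * Real.exp (1 / n)) ^ n := by gcongr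
    _ = ((n:ℝ) ^ n * f ^ n) * (Real.exp 1 * Real.exp 1) := by
        rw [mul_pow, mul_pow, hE]; ring
    _ < ((n:ℝ) ^ n * f ^ n) * (n * f) := by
        have : Real.exp 1 * Real.exp 1 < n * f := by nlinarith
        gcongr
    _ = _ := by ring
end

section
/- For every natural number n ≥ 89 and every natural number i with 1 ≤ i ≤ n, (log(n+1))^{n−(i−1)}·(log log(n+1) − 1/2)^{i−1} < (log n)^{n+1−(i−1)}·(log log n − 1/2)^{i−1}. (Inequality (3.3).) -/
open Real

theorem ineq_3_3 (n i : ℕ) (hn : 89 ≤ n) (hi1 : 1 ≤ i) (hi2 : i ≤ n) :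
    (Real.log ((n : ℝ) + 1)) ^ (n - (i - 1)) *
        (Real.log (Real.log ((n : ℝ) + 1)) - 1 / 2) ^ (i - 1) <
      (Real.log n) ^ (n + 1 - (i - 1)) * (Real.log (Real.log n) - 1 / 2) ^ (i - 1) := by
  obtain ⟨j, hj⟩ : ∃ j, j = i - 1 := ⟨_, rfl⟩
  rw [← hj]
  have hjn : j ≤ n := by omega
  have hn' : (89 : ℝ) ≤ n := by exact_mod_cast hn
  have hn0 : (0 : ℝ) < n := by linarith
  have he := Real.exp_one_lt_d9
  have he0 := Real.exp_pos 1
  have hL : 4 ≤ Real.log n := by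
    rw [Real.le_log_iff_exp_le hn0]
    have h1 : Real.exp 4 = Real.exp 1 ^ 4 := by
      rw [← Real.exp_nat_mul]; norm_num
    have h2 : Real.exp 1 ^ 4 ≤ 3 ^ 4 := by
      apply pow_le_pow_left₀ he0.le; linarith
    rw [h1]; linarith
  have hM : Real.log ((n : ℝ) + 1) ≤ Real.log n * (1 + 1 / (4 * n)) := by
    have h1 : (n : ℝ) + 1 = n * (1 + 1 / n) := by field_simp
    have h2 : Real.log (1 + 1 / (n : ℝ)) ≤ 1 / n := by
      have := Real.log_le_sub_one_of_pos (show (0 : ℝ) < 1 + 1 / n by positivity)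
      linarith
    rw [h1, Real.log_mul (by positivity) (by positivity)]
    have h3 : 4 * (1 / (4 * (n : ℝ))) ≤ Real.log n * (1 / (4 * n)) :=
      mul_le_mul_of_nonneg_right hL (by positivity)
    have h4 : 4 * (1 / (4 * (n : ℝ))) = 1 / n := by field_simp
    linarith
  have hLM : Real.log n ≤ Real.log ((n : ℝ) + 1) :=
    Real.log_le_log hn0 (by linarith)
  set L := Real.log n
  set M := Real.log ((n : ℝ) + 1)
  have hl : 1 ≤ Real.log L := by
    rw [Real.le_log_iff_exp_le (by linarith)]; linarith
  have hlM : Real.log L ≤ Real.log M := Real.log_le_log (by linarith) hLM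
  have hm : Real.log M ≤ Real.log L + 1 / (4 * n) := by
    have h1 : Real.log M ≤ Real.log (L * (1 + 1 / (4 * n))) :=
      Real.log_le_log (by linarith) hM
    rw [Real.log_mul (by positivity) (by positivity)] at h1
    have := Real.log_le_sub_one_of_pos (show (0 : ℝ) < 1 + 1 / (4 * n) by positivity)
    linarith
  set c : ℝ := 1 + 1 / (2 * n) with hc
  have hq : 1 / (2 * (n : ℝ)) = 2 * (1 / (4 * n)) := by field_simp; norm_num
  have hq0 : 0 < 1 / (4 * (n : ℝ)) := by positivity
  have hMc : M ≤ L * c := by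
    refine hM.trans (mul_le_mul_of_nonneg_left ?_ (by linarith))
    rw [hc, hq]; linarith
  have hmc : Real.log M - 1 / 2 ≤ (Real.log L - 1 / 2) * c := by
    rw [hc, hq]; nlinarith
  have hcn : c ^ n < 4 := by
    have h1 : c ≤ Real.exp (1 / (2 * n)) := by
      have := Real.add_one_le_exp (1 / (2 * (n : ℝ)))
      linarith
    have h2 : c ^ n ≤ Real.exp (1 / (2 * n)) ^ n :=
      pow_le_pow_left₀ (by positivity) h1 n
    rw [← Real.exp_nat_mul] at h2
    have h3 : (n : ℝ) * (1 / (2 * n)) ≤ 1 := by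
      have : (n : ℝ) * (1 / (2 * n)) = 1 / 2 := by field_simp
      rw [this]; norm_num
    have h4 := Real.exp_le_exp.2 h3
    linarith
  have hl0 : 0 < Real.log L - 1 / 2 := by linarith
  have hL0 : 0 < L := by linarith
  calc M ^ (n - j) * (Real.log M - 1 / 2) ^ j
      ≤ (L * c) ^ (n - j) * ((Real.log L - 1 / 2) * c) ^ j := by
        apply mul_le_mul
        · exact pow_le_pow_left₀ (by linarith) hMc _
        · exact pow_le_pow_left₀ (by linarith) hmc _
        · exact pow_nonneg (by linarith) _
        · positivity
    _ = (L ^ (n - j) * (Real.log L - 1 / 2) ^ j) * c ^ n := by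
        have : c ^ n = c ^ (n - j) * c ^ j := by
          rw [← pow_add]; congr 1; omega
        rw [this, mul_pow, mul_pow]; ring
    _ < (L ^ (n - j) * (Real.log L - 1 / 2) ^ j) * L :=
        mul_lt_mul_of_pos_left (by linarith) (by positivity)
    _ = L ^ (n + 1 - j) * (Real.log L - 1 / 2) ^ j := by
        have : n + 1 - j = (n - j) + 1 := by omega
        rw [this, pow_succ]; ring
end

section
/- For every natural number n ≥ 89 and every natural number i with 2 ≤ i ≤ n, (1 + log(1 + 1/n)/log n)^{n−(i−1)} · ((log log(n+1) − 1/2)/(log log n − 1/2))^{i−1} < log n. (Inequality (3.6).) -/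
open Real

theorem ineq_3_6 (n i : ℕ) (hn : 89 ≤ n) (hi1 : 2 ≤ i) (hi2 : i ≤ n) :
    (1 + Real.log (1 + 1 / (n : ℝ)) / Real.log n) ^ (n - (i - 1)) *
        ((Real.log (Real.log ((n : ℝ) + 1)) - 1 / 2) /
          (Real.log (Real.log n) - 1 / 2)) ^ (i - 1) <
      Real.log n := by
  have hn' : (89 : ℝ) ≤ n := by exact_mod_cast hn
  have hn0 : (0 : ℝ) < n := by linarith
  have he : Real.exp 1 < 2.7182818286 := Real.exp_one_lt_d9
  have he0 : 0 < Real.exp 1 := Real.exp_pos 1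
  have hL : 4 ≤ Real.log n := by
    rw [Real.le_log_iff_exp_le hn0]
    have h4 : Real.exp 4 = Real.exp 1 ^ 4 := by rw [← Real.exp_nat_mul]; norm_num
    have : Real.exp 1 ^ 4 ≤ 2.7182818286 ^ 4 := by gcongr
    rw [h4]
    refine this.trans (le_trans ?_ hn')
    norm_num
  set L := Real.log n with hLdef
  have hL0 : 0 < L := by linarith
  have hLL : 1 ≤ Real.log L := by
    rw [Real.le_log_iff_exp_le hL0]; linarith
  set D := Real.log L - 1 / 2 with hD
  have hD2 : 1 / 2 ≤ D := by linarith
  have hD0 : 0 < D := by linarith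
  set t := Real.log (1 + 1 / (n : ℝ)) with ht
  have hinv : 0 < 1 / (n : ℝ) := by positivity
  have ht0 : 0 ≤ t := Real.log_nonneg (by linarith)
  have ht1 : t ≤ 1 / n := by
    have := Real.log_le_sub_one_of_pos (show 0 < 1 + 1 / (n : ℝ) by linarith)
    linarith
  have hlog : Real.log ((n : ℝ) + 1) = L + t := by
    rw [hLdef, ht, ← Real.log_mul (by positivity) (by positivity)]
    congr 1; field_simp
  set s := t / L with hs
  have hs0 : 0 ≤ s := by positivity
  have hs1 : s ≤ 1 / n / L := by rw [hs]; gcongr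
  have hll : Real.log (L + t) = Real.log L + Real.log (1 + s) := by
    have h1 : L + t = L * (1 + s) := by rw [hs]; field_simp
    rw [h1, Real.log_mul (by positivity) (by positivity)]
  have hu0 : 0 ≤ Real.log (1 + s) := Real.log_nonneg (by linarith)
  have hu1 : Real.log (1 + s) ≤ s := by
    have := Real.log_le_sub_one_of_pos (show 0 < 1 + s by linarith)
    linarith
  set x := 2 * (1 / (n : ℝ) / L) with hx
  have hB : (Real.log (Real.log ((n : ℝ) + 1)) - 1 / 2) / D = 1 + Real.log (1 + s) / D := by
    rw [hlog, hll, div_eq_iff hD0.ne', add_mul, div_mul_cancel₀ _ hD0.ne']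
    linarith
  have hexp : x + 1 ≤ Real.exp x := Real.add_one_le_exp x
  have hA1 : 1 + s ≤ Real.exp x := by linarith
  have hB1 : 1 + Real.log (1 + s) / D ≤ Real.exp x := by
    have : Real.log (1 + s) / D ≤ 2 * s := by
      rw [div_le_iff₀ hD0]; nlinarith
    linarith
  rw [hB]
  have hB0 : 0 ≤ Real.log (1 + s) / D := by positivity
  calc (1 + s) ^ (n - (i - 1)) * (1 + Real.log (1 + s) / D) ^ (i - 1)
      ≤ Real.exp x ^ (n - (i - 1)) * Real.exp x ^ (i - 1) := by gcongr
    _ = Real.exp x ^ n := by rw [← pow_add]; congr 1; omega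
    _ = Real.exp (2 / L) := by
        rw [← Real.exp_nat_mul, hx]; congr 1; field_simp
    _ ≤ Real.exp 1 := by
        apply Real.exp_le_exp.mpr
        rw [div_le_iff₀ hL0]; linarith
    _ < L := by linarith
end

section
/- For every natural number n ≥ 89, (log log(n+1) − 1/2)^n < (n+1)·(log n)·(log log n − 1/2)^n + (log log n − 1/2)^{n+1}. (Inequality (3.7).) -/
open Real

theorem ineq_3_7 (n : ℕ) (hn : 89 ≤ n) :
    (Real.log (Real.log ((n : ℝ) + 1)) - 1 / 2) ^ n <
      ((n : ℝ) + 1) * Real.log n * (Real.log (Real.log n) - 1 / 2) ^ n +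
        (Real.log (Real.log n) - 1 / 2) ^ (n + 1) := by
  have hN : (89 : ℝ) ≤ n := by exact_mod_cast hn
  have hN0 : (0 : ℝ) < n := by linarith
  have he : Real.exp 1 < 3 := by linarith [Real.exp_one_lt_d9]
  have hL : (4 : ℝ) ≤ Real.log n := by
    rw [Real.le_log_iff_exp_le hN0]
    have h1 : Real.exp 4 = Real.exp 1 ^ 4 := by
      rw [← Real.exp_nat_mul]; norm_num
    have h2 : Real.exp 1 ^ 4 ≤ (3 : ℝ) ^ 4 :=
      pow_le_pow_left₀ (Real.exp_pos 1).le he.le 4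
    rw [h1]; linarith
  have hl4 : (1 : ℝ) < Real.log 4 := by
    rw [Real.lt_log_iff_exp_lt (by norm_num)]; linarith
  have hLL : Real.log 4 ≤ Real.log (Real.log n) := Real.log_le_log (by norm_num) hL
  have hL1 : Real.log (n : ℝ) ≤ Real.log ((n : ℝ) + 1) :=
    Real.log_le_log hN0 (by linarith)
  have hLL1 : Real.log (Real.log n) ≤ Real.log (Real.log ((n : ℝ) + 1)) :=
    Real.log_le_log (by linarith) hL1
  have hd1 : Real.log ((n : ℝ) + 1) - Real.log n ≤ 1 / n := by
    rw [← Real.log_div (by linarith) (by linarith)]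
    have := Real.log_le_sub_one_of_pos (x := ((n : ℝ) + 1) / n) (by positivity)
    have h2 : ((n : ℝ) + 1) / n - 1 = 1 / n := by field_simp; ring
    linarith
  have hd2 : Real.log (Real.log ((n : ℝ) + 1)) - Real.log (Real.log n) ≤ 1 / n / Real.log n := by
    rw [← Real.log_div (by linarith) (by linarith)]
    have h0 : 0 < Real.log (n : ℝ) := by linarith
    have h1 : 0 < Real.log ((n : ℝ) + 1) := by linarith
    have := Real.log_le_sub_one_of_pos (div_pos h1 h0)
    have h2 : Real.log ((n : ℝ) + 1) / Real.log n - 1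
        = (Real.log ((n : ℝ) + 1) - Real.log n) / Real.log n := by field_simp
    have h3 := div_le_div_of_nonneg_right hd1 h0.le
    linarith
  generalize Real.log (Real.log ((n : ℝ) + 1)) = B at *
  generalize Real.log (Real.log (n : ℝ)) = A at *
  generalize Real.log (n : ℝ) = L at *
  have ha : 1 / 2 < A - 1 / 2 := by linarith
  have hd3 : 1 / (n : ℝ) / L ≤ (A - 1 / 2) * (1 / n) := by
    rw [div_le_iff₀ (by linarith)]
    have : 1 ≤ (A - 1 / 2) * L := by nlinarith
    have h := mul_le_mul_of_nonneg_right this (by positivity : (0 : ℝ) ≤ 1 / n)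
    linarith
  have hb : B - 1 / 2 ≤ (A - 1 / 2) * Real.exp (1 / n) := by
    have := Real.add_one_le_exp (1 / (n : ℝ))
    nlinarith
  have hp : (B - 1 / 2) ^ n ≤ (A - 1 / 2) ^ n * Real.exp 1 := by
    have h := pow_le_pow_left₀ (by linarith : (0 : ℝ) ≤ B - 1 / 2) hb n
    rw [mul_pow, ← Real.exp_nat_mul, mul_one_div_cancel hN0.ne'] at h
    exact h
  have hpa : 0 < (A - 1 / 2) ^ n := pow_pos (by linarith) n
  have hpa' : 0 < (A - 1 / 2) ^ (n + 1) := pow_pos (by linarith) _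
  have hc : Real.exp 1 ≤ ((n : ℝ) + 1) * L := by nlinarith
  have := mul_le_mul_of_nonneg_right hc hpa.le
  linarith
end

section
/- For every natural number n ≥ 195340, 3n·log(3n) + 3n·log log(3n) − 3n/2 < (n·log n + n·log log n − 3n/2)^3. (Inequality (3.14).) -/
open Real

theorem ineq_3_14 (n : ℕ) (hn : 195340 ≤ n) :
    3 * (n : ℝ) * Real.log (3 * (n : ℝ)) + 3 * (n : ℝ) * Real.log (Real.log (3 * (n : ℝ)))
        - 3 * (n : ℝ) / 2 <
      ((n : ℝ) * Real.log n + (n : ℝ) * Real.log (Real.log n) - 3 * (n : ℝ) / 2) ^ 3 := by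
  have hx : (195340 : ℝ) ≤ (n : ℝ) := by exact_mod_cast hn
  generalize (n : ℝ) = x at hx
  have he := Real.exp_one_lt_d9
  have he0 := Real.exp_pos 1
  have h3 : (3 : ℝ) ≤ Real.log x := by
    rw [Real.le_log_iff_exp_le (by linarith)]
    have h : Real.exp 3 = Real.exp 1 ^ 3 := by
      rw [← Real.exp_nat_mul]; norm_num
    have h2 : Real.exp 1 ^ 3 ≤ 3 ^ 3 := by
      gcongr; linarith
    rw [h]; linarith
  have hll : (1 : ℝ) ≤ Real.log (Real.log x) := by
    rw [Real.le_log_iff_exp_le (by linarith)]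
    linarith
  have ha : Real.log (3 * x) ≤ 3 * x := by
    have := Real.log_le_sub_one_of_pos (show 0 < 3 * x by linarith)
    linarith
  have hpos : 0 < Real.log (3 * x) := Real.log_pos (by linarith)
  have hb : Real.log (Real.log (3 * x)) ≤ 3 * x := by
    have := Real.log_le_sub_one_of_pos hpos
    linarith
  have hr : x ≤ x * Real.log x + x * Real.log (Real.log x) - 3 * x / 2 := by
    nlinarith
  have hr3 : x ^ 3 ≤ (x * Real.log x + x * Real.log (Real.log x) - 3 * x / 2) ^ 3 := by
    have : 0 ≤ x := by linarith
    gcongr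
  have h1 : 3 * x * Real.log (3 * x) ≤ 3 * x * (3 * x) :=
    mul_le_mul_of_nonneg_left ha (by linarith)
  have h2 : 3 * x * Real.log (Real.log (3 * x)) ≤ 3 * x * (3 * x) :=
    mul_le_mul_of_nonneg_left hb (by linarith)
  have h4 : 18 * x ^ 2 ≤ x ^ 3 := by
    have : 0 ≤ x ^ 2 * (x - 18) := mul_nonneg (sq_nonneg x) (by linarith)
    nlinarith
  nlinarith
end
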